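/- Let X be a subspace of the Cantor set 2^ω, and assume ⟨⟨h_n, K_n⟩ : n ∈ ω⟩ is a Knaster-Reichbach system (with h_n : E_n → F_n) satisfying additionally: (7) 2^ω \ ⋃_{n∈ω} E_n ⊆ X; (8) 2^ω \ ⋃_{n∈ω} F_n ⊆ X; (9) h_n[X ∩ E_n] = X ∩ F_n for each n. Then there exists a homeomorphism h : 2^ω → 2^ω extending ⋃_{n∈ω} h_n and satisfying h[X] = X. -/

import Mathlib

/-- `𝒱` is a partition of `A` into non-empty clopen subsets of `ℕ → Bool`. -/
def IsClopenPartition (A : Set (ℕ → Bool)) (𝒱 : Set (Set (ℕ → Bool))) : Prop :=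
  (∀ U ∈ 𝒱, IsClopen U ∧ U.Nonempty) ∧ 𝒱.PairwiseDisjoint id ∧ ⋃₀ 𝒱 = A

/-- `⟨𝒱, 𝒲, ψ⟩` is a Knaster-Reichbach cover for `⟨2^ω \ E, 2^ω \ F, h⟩`. -/
def IsKRCover (E F : Set (ℕ → Bool)) (h : E ≃ₜ F)
    (𝒱 𝒲 : Set (Set (ℕ → Bool))) (ψ : Set (ℕ → Bool) → Set (ℕ → Bool)) : Prop :=
  IsClopenPartition Eᶜ 𝒱 ∧ IsClopenPartition Fᶜ 𝒲 ∧ Set.BijOn ψ 𝒱 𝒲 ∧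
    ∀ f : (ℕ → Bool) ≃ (ℕ → Bool),
      (∀ x : E, f (x : ℕ → Bool) = ((h x : F) : ℕ → Bool)) →
      (∀ U ∈ 𝒱, f '' U = ψ U) →
      (∀ x ∈ E, ContinuousAt f x) ∧ (∀ y ∈ F, ContinuousAt f.symm y)

/-- `⟨⟨h_n, ⟨𝒱_n, 𝒲_n, ψ_n⟩⟩ : n ∈ ω⟩` is a Knaster-Reichbach system with
respect to an admissible metric `m` on `2^ω`: each `h n : E n → F n` is a
homeomorphism between closed nowhere dense subsets of `2^ω`; the `h n` form an
increasing (as graphs) sequence; each `⟨𝒱 n, 𝒲 n, ψ n⟩` is a KR-cover for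
`⟨2^ω \ E n, 2^ω \ F n, h n⟩`; the meshes of `𝒱 n` and `𝒲 n` are at most
`2⁻ⁿ`; the partitions refine each other coherently with the `ψ n`. -/
def IsKRSystem (m : MetricSpace (ℕ → Bool))
    (E F : ℕ → Set (ℕ → Bool)) (h : ∀ n, E n ≃ₜ F n)
    (𝒱 𝒲 : ℕ → Set (Set (ℕ → Bool)))
    (ψ : ℕ → Set (ℕ → Bool) → Set (ℕ → Bool)) : Prop :=
  (∀ n, IsClosed (E n) ∧ IsNowhereDense (E n) ∧ IsClosed (F n) ∧ IsNowhereDense (F n)) ∧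
  (∀ k n, k ≤ n → E k ⊆ E n) ∧
  (∀ k n, k ≤ n → ∀ (x : ℕ → Bool) (hk : x ∈ E k) (hn : x ∈ E n),
    (((h k) ⟨x, hk⟩ : F k) : ℕ → Bool) = (((h n) ⟨x, hn⟩ : F n) : ℕ → Bool)) ∧
  (∀ n, IsKRCover (E n) (F n) (h n) (𝒱 n) (𝒲 n) (ψ n)) ∧
  (∀ n, ∀ U ∈ 𝒱 n, @Metric.diam _ m.toPseudoMetricSpace U ≤ (2 : ℝ)⁻¹ ^ n) ∧
  (∀ n, ∀ U ∈ 𝒲 n, @Metric.diam _ m.toPseudoMetricSpace U ≤ (2 : ℝ)⁻¹ ^ n) ∧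
  (∀ k n, n ≤ k → ∀ U ∈ 𝒱 k, ∃ V ∈ 𝒱 n, U ⊆ V) ∧
  (∀ k n, n ≤ k → ∀ U ∈ 𝒲 k, ∃ V ∈ 𝒲 n, U ⊆ V) ∧
  (∀ k n, n ≤ k → ∀ U ∈ 𝒱 k, ∀ V ∈ 𝒱 n, (U ⊆ V ↔ ψ k U ⊆ ψ n V))



open Set Topology

/-- Small cells shrink into neighbourhoods. -/
theorem kr_small (m : MetricSpace (ℕ → Bool))
    (hm : m.toPseudoMetricSpace.toUniformSpace.toTopologicalSpace
        = (inferInstance : TopologicalSpace (ℕ → Bool)))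
    (𝒲 : ℕ → Set (Set (ℕ → Bool)))
    (hd : ∀ n, ∀ U ∈ 𝒲 n, @Metric.diam _ m.toPseudoMetricSpace U ≤ (2 : ℝ)⁻¹ ^ n)
    (O : Set (ℕ → Bool)) (hO : IsOpen O) (y : ℕ → Bool) (hy : y ∈ O) :
    ∃ n, ∀ W ∈ 𝒲 n, y ∈ W → W ⊆ O := by
  have hO' : @IsOpen _ m.toPseudoMetricSpace.toUniformSpace.toTopologicalSpace O := by
    rw [hm]; exact hO
  have hc : @CompactSpace _ m.toPseudoMetricSpace.toUniformSpace.toTopologicalSpace := by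
    rw [hm]; infer_instance
  obtain ⟨ε, hε, hb⟩ := (@Metric.isOpen_iff _ m.toPseudoMetricSpace O).1 hO' y hy
  obtain ⟨n, hn⟩ := exists_pow_lt_of_lt_one hε (by norm_num : (2 : ℝ)⁻¹ < 1)
  refine ⟨n, fun W hW hyW z hz => hb ?_⟩
  have hbd : @Bornology.IsBounded _ m.toPseudoMetricSpace.toBornology W :=
    @Bornology.IsBounded.subset _ m.toPseudoMetricSpace.toBornology _ _
      (@IsCompact.isBounded _ m.toPseudoMetricSpace _
        (@isCompact_univ _ m.toPseudoMetricSpace.toUniformSpace.toTopologicalSpace hc))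
      (subset_univ W)
  have : @dist _ m.toDist z y ≤ @Metric.diam _ m.toPseudoMetricSpace W :=
    letI := m; Metric.dist_le_diam_of_mem hbd hz hyW
  exact lt_of_le_of_lt (this.trans (hd n W hW)) hn

theorem kr_card (U : Set (ℕ → Bool)) (hU : IsOpen U) (hne : U.Nonempty) :
    Cardinal.mk U = Cardinal.mk (ℕ → Bool) := by
  apply le_antisymm (Cardinal.mk_set_le U)
  obtain ⟨x, hx⟩ := hne
  obtain ⟨N, hN⟩ : ∃ N : ℕ, ∀ z : ℕ → Bool, (∀ i < N, z i = x i) → z ∈ U := by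
    obtain ⟨I, u, hu, hs⟩ := isOpen_pi_iff.1 hU x hx
    refine ⟨I.sup id + 1, fun z hz => hs fun i hi => ?_⟩
    have : i ≤ I.sup id := Finset.le_sup (f := id) hi
    rw [hz i (by omega)]
    exact (hu i hi).2
  refine Cardinal.mk_le_of_injective
    (f := fun z : ℕ → Bool => (⟨fun i => if i < N then x i else z (i - N), hN _ ?_⟩ : U)) ?_
  · intro i hi; simp [hi]
  · intro z w hzw
    funext i
    have := congrFun (congrArg Subtype.val hzw) (i + N)
    simpa using this

/-- A bijection between the whole space compatible with the cover exists. -/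
theorem kr_bij (E F : Set (ℕ → Bool)) (h : E ≃ₜ F)
    (𝒱 𝒲 : Set (Set (ℕ → Bool))) (ψ : Set (ℕ → Bool) → Set (ℕ → Bool))
    (hV : IsClopenPartition Eᶜ 𝒱) (hW : IsClopenPartition Fᶜ 𝒲) (hψ : BijOn ψ 𝒱 𝒲) :
    ∃ f : (ℕ → Bool) ≃ (ℕ → Bool),
      (∀ x : E, f (x : ℕ → Bool) = ((h x : F) : ℕ → Bool)) ∧
      (∀ U ∈ 𝒱, f '' U = ψ U) := by
  classical
  have hg : ∀ U : Set (ℕ → Bool), ∃ g : (ℕ → Bool) → (ℕ → Bool), U ∈ 𝒱 → BijOn g U (ψ U) := by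
    intro U
    by_cases hU : U ∈ 𝒱
    · have h1 := kr_card U (hV.1 U hU).1.isOpen (hV.1 U hU).2
      have h2 := kr_card (ψ U) (hW.1 _ (hψ.mapsTo hU)).1.isOpen (hW.1 _ (hψ.mapsTo hU)).2
      obtain ⟨e⟩ := Cardinal.eq.1 (h1.trans h2.symm)
      refine ⟨fun x => if hx : x ∈ U then (e ⟨x, hx⟩ : ℕ → Bool) else x, fun _ => ⟨?_, ?_, ?_⟩⟩
      · intro x hx; simp [hx]
      · intro x hx y hy hxy
        simp only [hx, hy, dif_pos] at hxy
        simpa using e.injective (Subtype.ext hxy)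
      · intro y hy
        refine ⟨e.symm ⟨y, hy⟩, (e.symm ⟨y, hy⟩).2, by simp⟩
    · exact ⟨id, fun h => absurd h hU⟩
  choose g hg using hg
  have hcell : ∀ x, ∃ U, x ∉ E → U ∈ 𝒱 ∧ x ∈ U := by
    intro x
    by_cases hx : x ∈ E
    · exact ⟨∅, fun h => absurd hx h⟩
    · have : x ∈ ⋃₀ 𝒱 := by rw [hV.2.2]; exact hx
      obtain ⟨U, hU, hxU⟩ := this
      exact ⟨U, fun _ => ⟨hU, hxU⟩⟩
  choose c hc using hcell
  have hnE : ∀ U ∈ 𝒱, ∀ x ∈ U, x ∉ E := by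
    intro U hU x hx
    have : x ∈ ⋃₀ 𝒱 := ⟨U, hU, hx⟩
    rw [hV.2.2] at this; exact this
  have hnF : ∀ U ∈ 𝒲, ∀ x ∈ U, x ∉ F := by
    intro U hU x hx
    have : x ∈ ⋃₀ 𝒲 := ⟨U, hU, hx⟩
    rw [hW.2.2] at this; exact this
  have hcU : ∀ U ∈ 𝒱, ∀ x ∈ U, c x = U := by
    intro U hU x hx
    have := hc x (hnE U hU x hx)
    exact hV.2.1.elim_set this.1 hU x this.2 hx
  let f : (ℕ → Bool) → (ℕ → Bool) := fun x => if hx : x ∈ E then (h ⟨x, hx⟩ : ℕ → Bool) else g (c x) x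
  have fE : ∀ x (hx : x ∈ E), f x = h ⟨x, hx⟩ := fun x hx => by simp [f, hx]
  have fU : ∀ U ∈ 𝒱, ∀ x ∈ U, f x = g U x := fun U hU x hx => by
    simp [f, hnE U hU x hx, hcU U hU x hx]
  have fU' : ∀ U ∈ 𝒱, f '' U = ψ U := fun U hU => by
    rw [← (hg U hU).image_eq]
    exact image_congr (fU U hU)
  have fUm : ∀ U ∈ 𝒱, ∀ x ∈ U, f x ∈ ψ U := fun U hU x hx => by
    rw [← fU' U hU]; exact mem_image_of_mem _ hx
  have fnF : ∀ x, x ∉ E → f x ∉ F := fun x hx =>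
    hnF _ (hψ.mapsTo (hc x hx).1) _ (fUm _ (hc x hx).1 x (hc x hx).2)
  have fF : ∀ x (hx : x ∈ E), f x ∈ F := fun x hx => by rw [fE x hx]; exact (h _).2
  have finj : Function.Injective f := by
    intro x y hxy
    by_cases hx : x ∈ E
    · by_cases hy : y ∈ E
      · rw [fE x hx, fE y hy] at hxy
        simpa using h.injective (Subtype.ext hxy)
      · exact absurd (hxy ▸ fF x hx) (fnF y hy)
    · by_cases hy : y ∈ E
      · exact absurd (hxy ▸ fF y hy) (fnF x hx)
      · obtain ⟨h1, h2⟩ := hc x hx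
        obtain ⟨h3, h4⟩ := hc y hy
        have h5 := fUm _ h1 _ h2
        have h6 := fUm _ h3 _ h4
        rw [← hxy] at h6
        have h7 := hψ.injOn h1 h3 (hW.2.1.elim_set (hψ.mapsTo h1) (hψ.mapsTo h3) _ h5 h6)
        rw [← h7] at h4
        rw [fU _ h1 _ h2, fU _ h1 _ h4] at hxy
        exact (hg _ h1).injOn h2 h4 hxy
  have fsurj : Function.Surjective f := by
    intro y
    by_cases hy : y ∈ F
    · refine ⟨h.symm ⟨y, hy⟩, ?_⟩
      rw [fE _ (h.symm ⟨y, hy⟩).2]; simp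
    · have : y ∈ ⋃₀ 𝒲 := by rw [hW.2.2]; exact hy
      obtain ⟨W, hWm, hyW⟩ := this
      obtain ⟨U, hU, rfl⟩ := hψ.surjOn hWm
      rw [← fU' U hU] at hyW
      obtain ⟨x, -, hx⟩ := hyW
      exact ⟨x, hx⟩
  exact ⟨Equiv.ofBijective f ⟨finj, fsurj⟩, fun x => fE x x.2, fU'⟩

/-- A decreasing intersection of chosen cells is non-empty. -/
theorem kr_inter (C : ℕ → Set (ℕ → Bool)) (hC : ∀ n, IsClopen (C n) ∧ (C n).Nonempty)
    (hdec : ∀ n, C (n + 1) ⊆ C n) : ∃ y, ∀ n, y ∈ C n := by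
  obtain ⟨y, hy⟩ := IsCompact.nonempty_iInter_of_sequence_nonempty_isCompact_isClosed C hdec
    (fun n => (hC n).2) (hC 0).1.isClosed.isCompact (fun n => (hC n).1.isClosed)
  exact ⟨y, mem_iInter.1 hy⟩

/-- Let `X` be a subspace of the Cantor set `2^ω` and let
`⟨⟨h_n, K_n⟩ : n ∈ ω⟩` be a Knaster-Reichbach system (with respect to an
admissible metric) satisfying additionally: (7) `2^ω \ ⋃ₙ E n ⊆ X`;
(8) `2^ω \ ⋃ₙ F n ⊆ X`; (9) `h n [X ∩ E n] = X ∩ F n` for each `n`. Then there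
exists a homeomorphism `H : 2^ω → 2^ω` extending `⋃ₙ h n` with `H[X] = X`. -/
theorem statement9 (X : Set (ℕ → Bool)) (m : MetricSpace (ℕ → Bool))
    (hm : m.toPseudoMetricSpace.toUniformSpace.toTopologicalSpace
        = (inferInstance : TopologicalSpace (ℕ → Bool)))
    (E F : ℕ → Set (ℕ → Bool)) (h : ∀ n, E n ≃ₜ F n)
    (𝒱 𝒲 : ℕ → Set (Set (ℕ → Bool)))
    (ψ : ℕ → Set (ℕ → Bool) → Set (ℕ → Bool))
    (hsys : IsKRSystem m E F h 𝒱 𝒲 ψ)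
    (h7 : (⋃ n, E n)ᶜ ⊆ X)
    (h8 : (⋃ n, F n)ᶜ ⊆ X)
    (h9 : ∀ n, Subtype.val '' (⇑(h n) '' (Subtype.val ⁻¹' X)) = X ∩ F n) :
    ∃ H : (ℕ → Bool) ≃ₜ (ℕ → Bool),
      (∀ (n : ℕ) (x : ℕ → Bool) (hx : x ∈ E n),
        H x = (((h n) ⟨x, hx⟩ : F n) : ℕ → Bool)) ∧ H '' X = X := by
  classical
  obtain ⟨hcl, hE, hcompat, hK, hdV, hdW, hrV, hrW, hcoh⟩ := hsys
  have hψ : ∀ n, BijOn (ψ n) (𝒱 n) (𝒲 n) := fun n => (hK n).2.2.1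
  have cellV : ∀ n x, x ∉ E n → ∃ U ∈ 𝒱 n, x ∈ U := by
    intro n x hx
    have : x ∈ ⋃₀ 𝒱 n := by rw [(hK n).1.2.2]; exact hx
    exact this
  have cellW : ∀ n y, y ∉ F n → ∃ U ∈ 𝒱 n, y ∈ ψ n U := by
    intro n y hy
    have : y ∈ ⋃₀ 𝒲 n := by rw [(hK n).2.1.2.2]; exact hy
    obtain ⟨W, hW, hyW⟩ := this
    obtain ⟨U, hU, rfl⟩ := (hψ n).surjOn hW
    exact ⟨U, hU, hyW⟩
  have nE : ∀ n, ∀ U ∈ 𝒱 n, ∀ x ∈ U, x ∉ E n := by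
    intro n U hU x hx
    have : x ∈ ⋃₀ 𝒱 n := ⟨U, hU, hx⟩
    rw [(hK n).1.2.2] at this; exact this
  have nF : ∀ n, ∀ U ∈ 𝒱 n, ∀ y ∈ ψ n U, y ∉ F n := by
    intro n U hU y hy
    have : y ∈ ⋃₀ 𝒲 n := ⟨ψ n U, (hψ n).mapsTo hU, hy⟩
    rw [(hK n).2.1.2.2] at this; exact this
  have uV : ∀ n, ∀ U ∈ 𝒱 n, ∀ V ∈ 𝒱 n, ∀ x, x ∈ U → x ∈ V → U = V :=
    fun n U hU V hV x h1 h2 => (hK n).1.2.1.elim_set hU hV x h1 h2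
  have uW : ∀ n, ∀ U ∈ 𝒱 n, ∀ V ∈ 𝒱 n, ∀ y, y ∈ ψ n U → y ∈ ψ n V → U = V :=
    fun n U hU V hV y h1 h2 => (hψ n).injOn hU hV
      ((hK n).2.1.2.1.elim_set ((hψ n).mapsTo hU) ((hψ n).mapsTo hV) y h1 h2)
  -- cells containing a common point are nested
  have nestV : ∀ k n, n ≤ k → ∀ U ∈ 𝒱 k, ∀ V ∈ 𝒱 n, ∀ x, x ∈ U → x ∈ V → U ⊆ V := by
    intro k n hnk U hU V hV x hxU hxV
    obtain ⟨V', hV', hUV'⟩ := hrV k n hnk U hU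
    rwa [uV n V hV V' hV' x hxV (hUV' hxU)]
  have nestW : ∀ k n, n ≤ k → ∀ U ∈ 𝒱 k, ∀ V ∈ 𝒱 n, ∀ y, y ∈ ψ k U → y ∈ ψ n V →
      ψ k U ⊆ ψ n V := by
    intro k n hnk U hU V hV y hyU hyV
    obtain ⟨W, hW, hUW⟩ := hrW k n hnk _ ((hψ k).mapsTo hU)
    obtain ⟨V', hV', rfl⟩ := (hψ n).surjOn hW
    rwa [uW n V hV V' hV' y hyV (hUW hyU)]
  -- points with common cells coincide
  have eqW : ∀ y y', (∀ n, ∃ U ∈ 𝒱 n, y ∈ ψ n U ∧ y' ∈ ψ n U) → y = y' := by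
    intro y y' hyy
    by_contra hne
    obtain ⟨n, hn⟩ := kr_small m hm 𝒲 hdW {y'}ᶜ isClosed_singleton.isOpen_compl y hne
    obtain ⟨U, hU, h1, h2⟩ := hyy n
    exact hn _ ((hψ n).mapsTo hU) h1 h2 rfl
  have eqV : ∀ x x', (∀ n, ∃ U ∈ 𝒱 n, x ∈ U ∧ x' ∈ U) → x = x' := by
    intro y y' hyy
    by_contra hne
    obtain ⟨n, hn⟩ := kr_small m hm 𝒱 hdV {y'}ᶜ isClosed_singleton.isOpen_compl y hne
    obtain ⟨U, hU, h1, h2⟩ := hyy n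
    exact hn _ hU h1 h2 rfl
  -- the key lemma
  have key : ∀ k n x (hx : x ∈ E k), ∀ V ∈ 𝒱 n, x ∈ V → ((h k ⟨x, hx⟩ : F k) : ℕ → Bool) ∈ ψ n V := by
    intro k n x hx V hV hxV
    have hnk : n ≤ k := by
      by_contra hlt
      exact nE n V hV x hxV (hE k n (by omega) hx)
    obtain ⟨f, hf1, hf2⟩ := kr_bij (E k) (F k) (h k) (𝒱 k) (𝒲 k) (ψ k) (hK k).1 (hK k).2.1 (hψ k)
    have hfc : ContinuousAt f x := ((hK k).2.2.2 f hf1 hf2).1 x hx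
    rw [← hf1 ⟨x, hx⟩]
    by_contra hnot
    have hopen : IsOpen (ψ n V)ᶜ := ((hK n).2.1.1 _ ((hψ n).mapsTo hV)).1.compl.isOpen
    have hnb : f ⁻¹' (ψ n V)ᶜ ∈ 𝓝 x := hfc (hopen.mem_nhds hnot)
    have hVn : V ∈ 𝓝 x := ((hK n).1.1 V hV).1.isOpen.mem_nhds hxV
    have hd : Dense (E k)ᶜ := by
      have := (hcl k).2.1
      rw [IsNowhereDense, (hcl k).1.closure_eq] at this
      exact interior_eq_empty_iff_dense_compl.1 this
    obtain ⟨z, hz, hzE⟩ := mem_closure_iff_nhds.1 (hd x) _ (Filter.inter_mem hnb hVn)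
    obtain ⟨U, hU, hzU⟩ := cellV k z hzE
    have hsub := (hcoh k n hnk U hU V hV).1 (nestV k n hnk U hU V hV z hzU hz.2)
    apply hz.1
    apply hsub
    rw [← hf2 U hU]
    exact mem_image_of_mem _ hzU
  let R : (ℕ → Bool) → (ℕ → Bool) → Prop := fun x y =>
    (∀ n (hx : x ∈ E n), y = (h n ⟨x, hx⟩ : F n)) ∧ ∀ n, ∀ V ∈ 𝒱 n, x ∈ V → y ∈ ψ n V
  have RE : ∀ k x (hx : x ∈ E k), R x (h k ⟨x, hx⟩ : F k) := by
    intro k x hx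
    refine ⟨fun n hn => ?_, fun n V hV hxV => key k n x hx V hV hxV⟩
    rcases le_total k n with hkn | hkn
    · exact hcompat k n hkn x hx hn
    · exact (hcompat n k hkn x hn hx).symm
  have Rex : ∀ x, ∃ y, R x y := by
    intro x
    by_cases hx : ∃ k, x ∈ E k
    · obtain ⟨k, hk⟩ := hx
      exact ⟨_, RE k x hk⟩
    · push Not at hx
      choose U hU hxU using fun n => cellV n x (hx n)
      obtain ⟨y, hy⟩ := kr_inter (fun n => ψ n (U n))
        (fun n => (hK n).2.1.1 _ ((hψ n).mapsTo (hU n)))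
        (fun n => (hcoh (n + 1) n (by omega) _ (hU _) _ (hU n)).1
          (nestV (n + 1) n (by omega) _ (hU _) _ (hU n) x (hxU _) (hxU _)))
      refine ⟨y, fun n hn => absurd hn (hx n), fun n V hV hxV => ?_⟩
      rw [uV n V hV _ (hU n) x hxV (hxU n)]
      exact hy n
  have Rsurj : ∀ y, ∃ x, R x y := by
    intro y
    by_cases hy : ∃ k, y ∈ F k
    · obtain ⟨k, hk⟩ := hy
      refine ⟨(h k).symm ⟨y, hk⟩, ?_⟩
      have := RE k _ ((h k).symm ⟨y, hk⟩).2
      simpa only [Subtype.coe_eta, Homeomorph.apply_symm_apply] using this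
    · push Not at hy
      choose U hU hyU using fun n => cellW n y (hy n)
      obtain ⟨x, hx⟩ := kr_inter U (fun n => (hK n).1.1 _ (hU n))
        (fun n => (hcoh (n + 1) n (by omega) _ (hU _) _ (hU n)).2
          (nestW (n + 1) n (by omega) _ (hU _) _ (hU n) y (hyU _) (hyU _)))
      refine ⟨x, fun n hn => absurd hn (nE n _ (hU n) x (hx n)), fun n V hV hxV => ?_⟩
      rw [uV n V hV _ (hU n) x hxV (hx n)]
      exact hyU n
  choose f hf using Rex
  have fE : ∀ n x (hx : x ∈ E n), f x = (h n ⟨x, hx⟩ : F n) := fun n x hx => (hf x).1 n hx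
  have fV : ∀ n, ∀ V ∈ 𝒱 n, ∀ x ∈ V, f x ∈ ψ n V := fun n V hV x hx => (hf x).2 n V hV hx
  have fEF : ∀ n x, x ∈ E n ↔ f x ∈ F n := by
    intro n x
    constructor
    · intro hx; rw [fE n x hx]; exact (h n _).2
    · intro hy
      by_contra hx
      obtain ⟨U, hU, hxU⟩ := cellV n x hx
      exact nF n U hU _ (fV n U hU x hxU) hy
  have finj : Function.Injective f := by
    intro x x' hxx
    by_cases hx : ∃ k, x ∈ E k
    · obtain ⟨k, hk⟩ := hx
      have hk' : x' ∈ E k := by rw [fEF, ← hxx, ← fEF]; exact hk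
      rw [fE k x hk, fE k x' hk'] at hxx
      simpa using (h k).injective (Subtype.ext hxx)
    · push Not at hx
      apply eqV
      intro n
      obtain ⟨U, hU, hxU⟩ := cellV n x (hx n)
      have hx' : x' ∉ E n := by rw [fEF, ← hxx, ← fEF]; exact hx n
      obtain ⟨U', hU', hxU'⟩ := cellV n x' hx'
      have h2 := fV n U' hU' x' hxU'
      rw [← hxx] at h2
      have := uW n U hU U' hU' _ (fV n U hU x hxU) h2
      exact ⟨U, hU, hxU, this ▸ hxU'⟩
  have fsurj : Function.Surjective f := by
    intro y
    obtain ⟨x, hx⟩ := Rsurj y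
    refine ⟨x, ?_⟩
    by_cases hk : ∃ k, x ∈ E k
    · obtain ⟨k, hk⟩ := hk
      rw [fE k x hk, hx.1 k hk]
    · push Not at hk
      apply eqW
      intro n
      obtain ⟨U, hU, hxU⟩ := cellV n x (hk n)
      exact ⟨U, hU, fV n U hU x hxU, hx.2 n U hU hxU⟩
  let e : (ℕ → Bool) ≃ (ℕ → Bool) := Equiv.ofBijective f ⟨finj, fsurj⟩
  have eim : ∀ n, ∀ U ∈ 𝒱 n, e '' U = ψ n U := by
    intro n U hU
    apply Subset.antisymm
    · rintro _ ⟨x, hx, rfl⟩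
      exact fV n U hU x hx
    · intro y hy
      obtain ⟨x, rfl⟩ := fsurj y
      have hx : x ∉ E n := fun hx => nF n U hU _ hy ((fEF n x).1 hx)
      obtain ⟨U', hU', hxU'⟩ := cellV n x hx
      have := uW n U hU U' hU' _ hy (fV n U' hU' x hxU')
      exact ⟨x, this ▸ hxU', rfl⟩
  have fcont : Continuous e := by
    rw [continuous_iff_continuousAt]
    intro x
    by_cases hx : ∃ k, x ∈ E k
    · obtain ⟨k, hk⟩ := hx
      exact ((hK k).2.2.2 e (fun x => fE k x x.2) (eim k)).1 x hk
    · push Not at hx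
      intro O hO
      obtain ⟨O', hO'O, hO', hxO'⟩ := mem_nhds_iff.1 hO
      obtain ⟨n, hn⟩ := kr_small m hm 𝒲 hdW O' hO' _ hxO'
      obtain ⟨U, hU, hxU⟩ := cellV n x (hx n)
      have hsub := hn _ ((hψ n).mapsTo hU) (fV n U hU x hxU)
      refine Filter.mem_map.2 (Filter.mem_of_superset
        (((hK n).1.1 U hU).1.isOpen.mem_nhds hxU) fun z hz => ?_)
      exact hO'O (hsub (fV n U hU z hz))
  refine ⟨fcont.homeoOfEquivCompactToT2, fun n x hx => fE n x hx, ?_⟩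
  change f '' X = X
  apply Subset.antisymm
  · rintro _ ⟨x, hx, rfl⟩
    by_cases hk : ∃ k, x ∈ E k
    · obtain ⟨k, hk⟩ := hk
      have : f x ∈ X ∩ F k := by
        rw [← h9 k, fE k x hk]
        exact ⟨_, ⟨⟨x, hk⟩, hx, rfl⟩, rfl⟩
      exact this.1
    · apply h8
      simpa [← fEF] using hk
  · intro y hy
    obtain ⟨x, rfl⟩ := fsurj y
    refine ⟨x, ?_, rfl⟩
    by_cases hk : ∃ k, x ∈ E k
    · obtain ⟨k, hk⟩ := hk
      have : f x ∈ X ∩ F k := ⟨hy, (fEF k x).1 hk⟩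
      rw [← h9 k] at this
      obtain ⟨_, ⟨z, hz, rfl⟩, hzx⟩ := this
      rw [← fE k z z.2] at hzx
      rw [← finj hzx]; exact hz
    · apply h7
      simpa using hk
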